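/- Let R ⊂ S be an integral t-closed FCP ring extension and let I := (R:S) be the conductor (the largest ideal of S contained in R; equivalently, the annihilator of the R-module S/R). Then V_R(I) = MSupp(S/R) and this set is finite; moreover, every prime ideal Q of S containing I satisfies Q = PS, where P := Q ∩ R. -/

import Mathlib

/-!
The finite chain condition and integrality make `S` a finite `R`-module, so the support of `S/R` is
`V(Ann(S/R)) = V(I ∩ R)`.

For subalgebras `T ⋖ U` the annihilator of `U/T` is maximal, since each `T + aU` is `T` or `U`
(`colon_isMaximal_of_covBy`). The product of these annihilators along a maximal chain from `R` to
`S` kills `S/R`, so `V(I ∩ R)` is a finite set of maximal ideals (`primes_over_colon_finite`).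

t-closedness makes `I` radical, so for `P ∈ V(I ∩ R)` there is `e ≡ 1` modulo `P` with `e P ⊆ I`.
Multiplying by `e` and applying t-closedness again shows that the finite `R/P`-algebra `S/PS` is
reduced and has no nontrivial idempotents. It is thus a field (`map_isMaximal_of_tClosed`), and
`PS` is the only prime of `S` over `P`.
-/

/-- A maximal chain of length `n` from `T` to `U`: each step is a covering. -/
def IsMaxChainFromTo {α : Type*} [PartialOrder α] (T U : α) (n : ℕ)
    (c : Fin (n + 1) → α) : Prop :=
  c 0 = T ∧ c (Fin.last n) = U ∧ ∀ i : Fin n, c i.castSucc ⋖ c i.succ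

/-- The subextension determined by `T ≤ U` is catenarian: all maximal chains from
`T` to `U` have the same length. -/
def IsCatenarianFromTo {α : Type*} [PartialOrder α] (T U : α) : Prop :=
  ∀ (n m : ℕ) (c : Fin (n + 1) → α) (d : Fin (m + 1) → α),
    IsMaxChainFromTo T U n c → IsMaxChainFromTo T U m d → n = m

/-- The extension `R ⊆ S` has FCP: every chain of `R`-subalgebras of `S` is finite. -/
def IsFCPExt (R S : Type*) [CommRing R] [CommRing S] [Algebra R S] : Prop :=
  ∀ C : Set (Subalgebra R S), IsChain (· ≤ ·) C → C.Finite

/-- The extension `R ⊆ S` is catenarian. -/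
def IsCatenarianExt (R S : Type*) [CommRing R] [CommRing S] [Algebra R S] : Prop :=
  IsCatenarianFromTo (⊥ : Subalgebra R S) ⊤

/-- The length `ℓ[T,U]`: the supremum of lengths of chains from `T` to `U`. -/
noncomputable def extLength {α : Type*} [PartialOrder α] (T U : α) : ℕ :=
  sSup {n | ∃ c : Fin (n + 1) → α, StrictMono c ∧ c 0 = T ∧ c (Fin.last n) = U}

/-- The conductor `(R:S)`: the largest ideal of `S` contained in `R`. -/
def conductorIdeal (R S : Type*) [CommRing R] [CommRing S] [Algebra R S] : Ideal S where
  carrier := {s : S | ∀ t : S, s * t ∈ (algebraMap R S).range}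
  add_mem' := fun ha hb t => by
    rw [add_mul]; exact add_mem (ha t) (hb t)
  zero_mem' := fun t => by rw [zero_mul]; exact zero_mem _
  smul_mem' := fun c s hs t => by
    simpa [smul_eq_mul, mul_comm, mul_assoc, mul_left_comm] using hs (c * t)

/-- The extension `R ⊆ S` is t-closed. -/
def IsTClosedExt (R S : Type*) [CommRing R] [CommRing S] [Algebra R S] : Prop :=
  ∀ (b : S) (r : R),
    b ^ 2 - algebraMap R S r * b ∈ (algebraMap R S).range →
    b ^ 3 - algebraMap R S r * b ^ 2 ∈ (algebraMap R S).range →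
    b ∈ (algebraMap R S).range

/-- `S/R` as an `R`-module. -/
abbrev extQuot (R S : Type*) [CommRing R] [CommRing S] [Algebra R S] :=
  S ⧸ LinearMap.range (Algebra.linearMap R S)

/-! ### Chain conditions and finiteness -/

/-- An infinite descending sequence for `r` would be an infinite chain. The relation is kept general
to cover both `<` and `>`. -/
lemma wellFounded_of_finite_chains {α : Type*} [PartialOrder α]
    (h : ∀ C : Set α, IsChain (· ≤ ·) C → C.Finite)
    (r : α → α → Prop) [IsStrictOrder α r] (hr : ∀ a b, r a b → a ≤ b ∨ b ≤ a) :
    WellFounded r := by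
  rw [RelEmbedding.wellFounded_iff_isEmpty]
  refine ⟨fun f => ?_⟩
  refine Set.infinite_range_of_injective f.injective (h _ ?_)
  rintro _ ⟨m, rfl⟩ _ ⟨n, rfl⟩ hne
  rcases lt_trichotomy m n with hmn | hmn | hmn
  · exact (hr _ _ (f.map_rel_iff.2 hmn)).symm
  · exact absurd (congrArg f hmn) hne
  · exact hr _ _ (f.map_rel_iff.2 hmn)

section

variable {R S : Type*} [CommRing R] [CommRing S] [Algebra R S]

lemma IsFCPExt.wellFoundedLT (h : IsFCPExt R S) : WellFoundedLT (Subalgebra R S) :=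
  ⟨wellFounded_of_finite_chains h _ fun _ _ hab => Or.inl (le_of_lt hab)⟩

lemma IsFCPExt.wellFoundedGT (h : IsFCPExt R S) : WellFoundedGT (Subalgebra R S) :=
  ⟨wellFounded_of_finite_chains h _ fun _ _ hab => Or.inr (le_of_lt hab)⟩

/-- Under the ascending chain condition on subalgebras, every integral subalgebra is generated by
finitely many integral elements, hence is a finite module. -/
lemma subalgebra_toSubmodule_fg [WellFoundedGT (Subalgebra R S)] [Algebra.IsIntegral R S]
    (T : Subalgebra R S) : (Subalgebra.toSubmodule T).FG := by
  obtain ⟨_, ⟨s, hsT, rfl⟩, hmax⟩ := wellFounded_gt.has_min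
    {U : Subalgebra R S | ∃ s : Finset S, (s : Set S) ⊆ T ∧ Algebra.adjoin R (s : Set S) = U}
    ⟨_, ∅, by simp, rfl⟩
  classical
  have hT : Algebra.adjoin R (s : Set S) = T := by
    refine le_antisymm (Algebra.adjoin_le hsT) fun x hx => ?_
    by_contra hxs
    refine hmax _ ⟨insert x s, ?_, rfl⟩ (lt_of_le_of_ne (Algebra.adjoin_mono (by simp)) fun h => ?_)
    · simpa [Set.insert_subset_iff] using ⟨hx, hsT⟩
    · exact hxs (h ▸ Algebra.subset_adjoin (by simp))
  rw [← hT]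
  exact fg_adjoin_of_finite s.finite_toSet fun x _ => Algebra.IsIntegral.isIntegral x

/-! ### The primes containing the conductor -/

/-- The subalgebra `T + aU` of `U`, for `T ⊆ U` and a scalar `a`. -/
def addSMulSubalgebra (T U : Subalgebra R S) (hTU : T ≤ U) (a : R) : Subalgebra R S where
  carrier := {x | ∃ t ∈ T, ∃ u ∈ U, x = t + a • u}
  mul_mem' := by
    rintro _ _ ⟨t, ht, u, hu, rfl⟩ ⟨t', ht', u', hu', rfl⟩
    refine ⟨t * t', mul_mem ht ht', t * u' + u * t' + a • (u * u'), ?_, ?_⟩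
    · exact add_mem (add_mem (mul_mem (hTU ht) hu') (mul_mem hu (hTU ht')))
        (U.smul_mem (mul_mem hu hu') a)
    · simp only [Algebra.smul_def]; ring
  add_mem' := by
    rintro _ _ ⟨t, ht, u, hu, rfl⟩ ⟨t', ht', u', hu', rfl⟩
    exact ⟨t + t', add_mem ht ht', u + u', add_mem hu hu', by simp only [smul_add]; ring⟩
  algebraMap_mem' r := ⟨algebraMap R S r, T.algebraMap_mem r, 0, zero_mem _, by simp⟩

/-- If `T ⋖ U` and `U` is a finite module, the annihilator of `U/T` is maximal. For `a : R` the
algebra `T + aU` is `T` or `U`, so `a` kills `U/T` or maps it onto itself; in the second case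
Nakayama's lemma makes `a` invertible modulo the annihilator. -/
lemma colon_isMaximal_of_covBy {T U : Subalgebra R S} (h : T ⋖ U)
    (hU : (Subalgebra.toSubmodule U).FG) :
    ((Subalgebra.toSubmodule T).colon (U : Set S)).IsMaximal := by
  rw [Ideal.isMaximal_iff]
  constructor
  · intro h1
    refine h.lt.not_ge fun u hu => ?_
    simpa using Submodule.mem_colon.1 h1 u hu
  · intro J a hJ haT haJ
    have hle : T ≤ addSMulSubalgebra T U h.le a := fun t ht => ⟨t, ht, 0, zero_mem _, by simp⟩
    have hle' : addSMulSubalgebra T U h.le a ≤ U := by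
      rintro _ ⟨t, ht, u, hu, rfl⟩
      exact add_mem (h.le ht) (U.smul_mem hu a)
    rcases h.eq_or_eq hle hle' with heq | heq
    · refine absurd (Submodule.mem_colon.2 fun u hu => ?_) haT
      have : a • u ∈ addSMulSubalgebra T U h.le a := ⟨0, zero_mem _, u, hu, by simp⟩
      rw [heq] at this
      exact this
    · obtain ⟨r, hr, hrU⟩ := Submodule.exists_sub_one_mem_and_smul_le_of_fg_of_le_sup
        (I := Ideal.span {a}) (N := Subalgebra.toSubmodule T) hU le_rfl (by
          intro x hx
          have hx' : x ∈ addSMulSubalgebra T U h.le a := by rw [heq]; exact hx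
          obtain ⟨t, ht, u, hu, rfl⟩ := hx'
          exact Submodule.add_mem_sup ht
            (Submodule.smul_mem_smul (Ideal.mem_span_singleton_self a) hu))
      have hrJ : r ∈ J := hJ (Submodule.mem_colon.2 fun u hu =>
        hrU (Submodule.smul_mem_pointwise_smul u r _ hu))
      have : r - 1 ∈ J := (Ideal.span_singleton_le_iff_mem J).2 haJ hr
      simpa using sub_mem hrJ this

/-- Along a maximal chain from `R` to `T`, a prime containing the annihilator of `T/R` contains, and
so equals, the annihilator of one of the steps. -/
lemma primes_over_colon_finite [WellFoundedLT (Subalgebra R S)] [WellFoundedGT (Subalgebra R S)]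
    [Algebra.IsIntegral R S] (T : Subalgebra R S) :
    {p : PrimeSpectrum R | (Subalgebra.toSubmodule (⊥ : Subalgebra R S)).colon (T : Set S) ≤
      p.asIdeal}.Finite ∧
    ∀ p : PrimeSpectrum R, (Subalgebra.toSubmodule (⊥ : Subalgebra R S)).colon (T : Set S) ≤
      p.asIdeal → p.asIdeal.IsMaximal := by
  induction T using WellFoundedLT.induction with
  | ind T ih =>
    rcases eq_or_ne T ⊥ with rfl | hT
    · have key : ∀ p : PrimeSpectrum R, ¬ (Subalgebra.toSubmodule (⊥ : Subalgebra R S)).colon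
          ((⊥ : Subalgebra R S) : Set S) ≤ p.asIdeal := fun p hp =>
        p.2.ne_top ((Ideal.eq_top_iff_one _).2 (hp (Submodule.mem_colon.2 fun u hu => by
          rw [one_smul]; exact hu)))
      exact ⟨Set.finite_empty.subset fun p hp => key p hp, fun p hp => absurd hp (key p)⟩
    · obtain ⟨T₀, hT₀, hmax⟩ := wellFounded_gt.has_min {U : Subalgebra R S | U < T}
        ⟨⊥, bot_lt_iff_ne_bot.2 hT⟩
      have hcov : T₀ ⋖ T := ⟨hT₀, fun U h1 h2 => hmax U h2 h1⟩
      obtain ⟨hfin, hmaxl⟩ := ih T₀ hT₀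
      have hM := colon_isMaximal_of_covBy hcov (subalgebra_toSubmodule_fg T)
      have key : ∀ p : PrimeSpectrum R, (Subalgebra.toSubmodule (⊥ : Subalgebra R S)).colon
          (T : Set S) ≤ p.asIdeal →
          (Subalgebra.toSubmodule (⊥ : Subalgebra R S)).colon (T₀ : Set S) ≤ p.asIdeal ∨
          p = ⟨_, hM.isPrime⟩ := by
        intro p hp
        have hmul : (Subalgebra.toSubmodule (⊥ : Subalgebra R S)).colon (T₀ : Set S) *
            (Subalgebra.toSubmodule T₀).colon (T : Set S) ≤ p.asIdeal := by
          refine le_trans (Ideal.mul_le.2 fun a ha b hb => Submodule.mem_colon.2 fun u hu => ?_) hp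
          rw [mul_smul]
          exact Submodule.mem_colon.1 ha _ (Submodule.mem_colon.1 hb u hu)
        rcases (p.2.mul_le).1 hmul with h | h
        · exact Or.inl h
        · exact Or.inr (PrimeSpectrum.ext (hM.eq_of_le p.2.ne_top h).symm)
      constructor
      · refine (hfin.union (Set.finite_singleton ⟨_, hM.isPrime⟩)).subset fun p hp => ?_
        exact key p hp
      · intro p hp
        rcases key p hp with h | rfl
        · exact hmaxl p h
        · exact hM

lemma conductor_comap_eq_colon :
    (conductorIdeal R S).comap (algebraMap R S) =
      (Subalgebra.toSubmodule (⊥ : Subalgebra R S)).colon ((⊤ : Subalgebra R S) : Set S) := by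
  ext a
  rw [Submodule.mem_colon]
  simp only [Algebra.smul_def]
  exact ⟨fun h s _ => h s, fun h s => h s trivial⟩

lemma conductor_comap_eq_annihilator :
    (conductorIdeal R S).comap (algebraMap R S) = Module.annihilator R (extQuot R S) := by
  ext a
  rw [Module.mem_annihilator]
  constructor
  · intro h m
    obtain ⟨s, rfl⟩ := Submodule.Quotient.mk_surjective _ m
    rw [← Submodule.Quotient.mk_smul, Submodule.Quotient.mk_eq_zero, Algebra.smul_def]
    exact h s
  · intro h s
    have := h (Submodule.Quotient.mk s)
    rw [← Submodule.Quotient.mk_smul, Submodule.Quotient.mk_eq_zero, Algebra.smul_def] at this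
    exact this

/-! ### The fibres over the conductor -/

lemma mem_range_of_mem_conductor {x : S} (hx : x ∈ conductorIdeal R S) :
    x ∈ (algebraMap R S).range := by
  simpa using hx 1

/-- The case `r = 0` of t-closedness, applied to all multiples of an element with square in the
conductor, shows that the conductor is a radical ideal of `S`. -/
lemma IsTClosedExt.mem_conductor_of_sq (h : IsTClosedExt R S) {b : S}
    (hb : b ^ 2 ∈ conductorIdeal R S) : b ∈ conductorIdeal R S := fun t => by
  refine h (b * t) 0 ?_ ?_
  · convert hb (t ^ 2) using 1
    simp only [map_zero]; ring
  · convert hb (b * t ^ 3) using 1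
    simp only [map_zero]; ring

lemma isRadical_of_sq {A : Type*} [CommRing A] {J : Ideal A}
    (h : ∀ b, b ^ 2 ∈ J → b ∈ J) : J.IsRadical := by
  rw [Ideal.isRadical_iff_quotient_reduced]
  refine (isReduced_iff_pow_one_lt 2 one_lt_two).2 fun x hx => ?_
  obtain ⟨b, rfl⟩ := Ideal.Quotient.mk_surjective x
  rw [← map_pow, Ideal.Quotient.eq_zero_iff_mem] at hx
  exact Ideal.Quotient.eq_zero_iff_mem.2 (h b hx)

/-- In a reduced Artinian ring every `x` satisfies `x = x²y` for some `y`, so `xy` is idempotent;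
when `0` and `1` are the only idempotents, `x` is zero or a unit. -/
lemma isField_of_isArtinianRing_of_idempotent {A : Type*} [CommRing A] [Nontrivial A]
    [IsArtinianRing A] (hsq : ∀ x : A, x ^ 2 = 0 → x = 0)
    (hid : ∀ x : A, x ^ 2 = x → x = 0 ∨ x = 1) : IsField A := by
  have : IsReduced A := (isReduced_iff_pow_one_lt 2 one_lt_two).2 hsq
  refine ⟨⟨0, 1, zero_ne_one⟩, mul_comm, fun {x} hx => ?_⟩
  obtain ⟨n, y, hy⟩ := IsArtinian.exists_pow_succ_smul_dvd x (1 : A)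
  simp only [smul_eq_mul, mul_one] at hy
  have hx' : x * (x * y - 1) = 0 := by
    refine pow_eq_zero_iff (n := n + 1) (by simp) |>.1 ?_
    calc (x * (x * y - 1)) ^ (n + 1) = (x ^ n.succ * y - x ^ n) * (x * (x * y - 1) ^ n) := by
          rw [mul_pow, Nat.succ_eq_add_one]; ring
      _ = 0 := by rw [hy]; ring
  rcases hid (x * y) (by linear_combination y * hx') with h | h
  · rw [h] at hx'
    exact absurd (by linear_combination - hx') hx
  · exact ⟨y, h⟩

/-- Reduction of the fibre of `S` over `P` to the conductor. If `e P` lies in the conductor and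
`e ≡ 1` modulo `P`, multiplication by `e` turns elements of `S` that are square-zero or idempotent
modulo `PS` into elements to which t-closedness applies. -/
lemma map_isMaximal_of_tClosed [Module.Finite R S] (htcl : IsTClosedExt R S)
    {P : Ideal R} [P.IsMaximal] (hIP : (conductorIdeal R S).comap (algebraMap R S) ≤ P)
    (hP : P.map (algebraMap R S) ≠ ⊤) (e : R) (he : 1 - e ∈ P)
    (heP : ∀ x ∈ P, algebraMap R S (e * x) ∈ conductorIdeal R S) :
    (P.map (algebraMap R S)).IsMaximal := by
  set f := algebraMap R S
  set J := P.map f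
  have hIJ : conductorIdeal R S ≤ J := fun x hx => by
    obtain ⟨r, rfl⟩ := mem_range_of_mem_conductor hx
    exact Ideal.mem_map_of_mem f (hIP hx)
  have heJ : ∀ y ∈ J, f e * y ∈ conductorIdeal R S := by
    have : J ≤ (conductorIdeal R S).colon {f e} := Ideal.map_le_iff_le_comap.2 fun x hx => by
      rw [Ideal.mem_comap, Submodule.mem_colon_singleton, smul_eq_mul, mul_comm, ← map_mul]
      exact heP x hx
    intro y hy
    simpa [mul_comm] using Submodule.mem_colon_singleton.1 (this hy)
  have h1e : ∀ x : S, x - f e * x ∈ J := fun x => by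
    have := J.mul_mem_right x (Ideal.mem_map_of_mem f he)
    simpa [sub_mul] using this
  have hcomap : J.comap f = P := Ideal.comap_map_eq_self_of_isMaximal f hP
  have : Nontrivial (S ⧸ J) := Ideal.Quotient.nontrivial_iff.2 hP
  let : Field (R ⧸ P) := Ideal.Quotient.field P
  have : Module.Finite (R ⧸ P) (S ⧸ J) :=
    Module.Finite.of_restrictScalars_finite R (R ⧸ P) (S ⧸ P.map (algebraMap R S))
  have : IsArtinianRing (S ⧸ J) := IsArtinianRing.of_finite (R ⧸ P) (S ⧸ J)
  refine Ideal.Quotient.maximal_of_isField _ (isField_of_isArtinianRing_of_idempotent ?_ ?_)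
  · intro x hx
    obtain ⟨b, rfl⟩ := Ideal.Quotient.mk_surjective x
    rw [← map_pow, Ideal.Quotient.eq_zero_iff_mem] at hx
    rw [Ideal.Quotient.eq_zero_iff_mem]
    have h1 : f e * b ∈ conductorIdeal R S := htcl.mem_conductor_of_sq (by
      rw [show (f e * b) ^ 2 = f e * (f e * b ^ 2) by ring]
      exact heJ _ (J.mul_mem_left _ hx))
    simpa using add_mem (h1e b) (hIJ h1)
  · intro x hx
    obtain ⟨b, rfl⟩ := Ideal.Quotient.mk_surjective x
    rw [← map_pow, Ideal.Quotient.mk_eq_mk_iff_sub_mem] at hx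
    have h1 : f e * b ∈ f.range := by
      refine htcl _ e (mem_range_of_mem_conductor ?_) (mem_range_of_mem_conductor ?_)
      · convert heJ _ (J.mul_mem_left (f e) hx) using 1
        ring
      · convert heJ _ (J.mul_mem_left (f e * f e * b) hx) using 1
        ring
    obtain ⟨r, hr⟩ := h1
    have hbr : b - f r ∈ J := by rw [hr]; exact h1e b
    have hrP : r * (r - 1) ∈ P := by
      rw [← hcomap, Ideal.mem_comap]
      have : f (r * (r - 1)) = (b ^ 2 - b) - (b - f r) * (b + f r - 1) := by
        simp only [map_mul, map_sub, map_one]; ring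
      rw [this]
      exact sub_mem hx (J.mul_mem_right _ hbr)
    rcases Ideal.IsPrime.mem_or_mem inferInstance hrP with h | h
    · left
      rw [Ideal.Quotient.eq_zero_iff_mem]
      simpa using add_mem hbr (Ideal.mem_map_of_mem f h)
    · right
      rw [← map_one (Ideal.Quotient.mk J), Ideal.Quotient.mk_eq_mk_iff_sub_mem]
      simpa using add_mem hbr (Ideal.mem_map_of_mem f h)

/-- Let `I` be a radical ideal of a ring with `V(I)` a finite set of maximal ideals. By the Chinese
remainder theorem, for each maximal ideal `P` there is `e ≡ 1` modulo `P` lying in all members of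
`V(I)` other than `P`, so that `e P ⊆ I`. -/
lemma exists_one_sub_mem_mul_mem {A : Type*} [CommRing A] {I P : Ideal A} [P.IsMaximal]
    (hI : I.IsRadical) (hfin : (PrimeSpectrum.zeroLocus (I : Set A)).Finite)
    (hmax : ∀ p ∈ PrimeSpectrum.zeroLocus (I : Set A), p.asIdeal.IsMaximal) :
    ∃ e : A, 1 - e ∈ P ∧ ∀ x ∈ P, e * x ∈ I := by
  classical
  let s := hfin.toFinset.filter fun p => p.asIdeal ≠ P
  have hs : P ⊔ ⨅ p ∈ s, p.asIdeal = ⊤ := Ideal.sup_iInf_eq_top fun p hp => by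
    have hp' : p ∈ PrimeSpectrum.zeroLocus (I : Set A) ∧ p.asIdeal ≠ P := by simpa [s] using hp
    have := hmax p hp'.1
    exact Ideal.IsMaximal.coprime_of_ne inferInstance this hp'.2.symm
  obtain ⟨a, ha, e, he, hae⟩ := Submodule.mem_sup.1 ((Ideal.eq_top_iff_one _).1 hs)
  refine ⟨e, by rw [← hae]; simpa using ha, fun x hx => ?_⟩
  rw [← hI.radical, Ideal.radical_eq_sInf]
  refine Submodule.mem_sInf.2 fun q hq => ?_
  by_cases hqP : q = P
  · exact hqP ▸ Ideal.mul_mem_left _ _ hx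
  · refine Ideal.mul_mem_right _ _ ?_
    have := (Submodule.mem_iInf _).1 ((Submodule.mem_iInf _).1 he ⟨q, hq.2⟩)
    exact this (by simpa [s, hqP] using hq.1)

end

/-- For an integral t-closed FCP extension `R ⊂ S` with conductor
`I := (R:S)`, the set `V_R(I)` equals `MSupp(S/R)` and is finite; moreover every
prime `Q` of `S` containing `I` satisfies `Q = PS` where `P := Q ∩ R`. -/
theorem stmt_13 {R S : Type*} [CommRing R] [CommRing S] [Algebra R S]
    (hinj : Function.Injective (algebraMap R S))
    (hproper : ¬Function.Surjective (algebraMap R S))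
    (hFCP : IsFCPExt R S) (hint : Algebra.IsIntegral R S)
    (htcl : IsTClosedExt R S) :
    PrimeSpectrum.zeroLocus
        (((conductorIdeal R S).comap (algebraMap R S) : Ideal R) : Set R) =
      {p : PrimeSpectrum R | p.asIdeal.IsMaximal ∧ p ∈ Module.support R (extQuot R S)} ∧
    (PrimeSpectrum.zeroLocus
        (((conductorIdeal R S).comap (algebraMap R S) : Ideal R) : Set R)).Finite ∧
    ∀ Q : Ideal S, Q.IsPrime → conductorIdeal R S ≤ Q →
      Q = Ideal.map (algebraMap R S) (Q.comap (algebraMap R S)) := by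
  have := hFCP.wellFoundedLT
  have := hFCP.wellFoundedGT
  have : Module.Finite R S := ⟨by
    simpa using subalgebra_toSubmodule_fg (R := R) (S := S) ⊤⟩
  obtain ⟨hfin, hmax⟩ := primes_over_colon_finite (⊤ : Subalgebra R S)
  rw [← conductor_comap_eq_colon] at hfin hmax
  refine ⟨?_, hfin, fun Q hQ hIQ => ?_⟩
  · rw [Module.support_eq_zeroLocus, ← conductor_comap_eq_annihilator]
    ext p
    exact ⟨fun hp => ⟨hmax p hp, hp⟩, fun hp => hp.2⟩
  · have hIP : (conductorIdeal R S).comap (algebraMap R S) ≤ Q.comap (algebraMap R S) :=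
      Ideal.comap_mono hIQ
    have hPmax : (Q.comap (algebraMap R S)).IsMaximal := hmax ⟨_, hQ.comap _⟩ hIP
    obtain ⟨e, he, heP⟩ := exists_one_sub_mem_mul_mem
      (P := Q.comap (algebraMap R S))
      ((isRadical_of_sq fun _ => htcl.mem_conductor_of_sq).comap (algebraMap R S)) hfin hmax
    have hle : (Q.comap (algebraMap R S)).map (algebraMap R S) ≤ Q := Ideal.map_comap_le
    exact ((map_isMaximal_of_tClosed htcl hIP (ne_top_of_le_ne_top hQ.ne_top hle) e he
      heP).eq_of_le hQ.ne_top hle).symm
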